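/- For every η > 0, max_{ρ∈Δ(Φ)} max_{ν∈Δ(Ψ)} min_{p∈Δ(Π)} AIR^Φ_{ρ,η}(p,ν) = DEC^KL_η(𝓜, Φ). -/

import Mathlib

open scoped BigOperators

noncomputable section

/-- A probability distribution on a finite type, represented as a nonnegative
function summing to one. -/
structure FDist (X : Type*) [Fintype X] where
  p : X → ℝ
  nonneg : ∀ x, 0 ≤ p x
  sum_one : ∑ x, p x = 1

/-- Kullback–Leibler divergence between two (finitely supported) distributions,
valued in `EReal`; it is `⊤` when `p` is not absolutely continuous w.r.t. `q`. -/
def KL {X : Type*} [Fintype X] (p q : X → ℝ) : EReal :=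
  haveI := Classical.propDecidable (∀ x, q x = 0 → p x = 0)
  if ∀ x, q x = 0 → p x = 0 then ((∑ x, p x * Real.log (p x / q x) : ℝ) : EReal)
  else (⊤ : EReal)

section GeneralDM

variable {Pol Obs Mod I : Type*}
variable [Fintype Pol] [Fintype Obs] [Fintype Mod] [Fintype I] [DecidableEq I]

/-- Posterior distribution over the partition cells `I` given prior `ν` on `Mod × Pol`,
after playing `π` and observing `o`. -/
def post (q : Mod → Pol → Obs → ℝ) (part : Mod × Pol → Option I)
    (ν : Mod × Pol → ℝ) (π : Pol) (o : Obs) : I → ℝ := fun i =>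
  (∑ mp : Mod × Pol, if part mp = some i then ν mp * q mp.1 π o else 0) /
    (∑ mp : Mod × Pol, ν mp * q mp.1 π o)

/-- `AIR^Φ_{ρ,η}(p,ν)`. -/
def AIR (q : Mod → Pol → Obs → ℝ) (V : Mod → Pol → ℝ) (part : Mod × Pol → Option I)
    (η : ℝ) (ρ : I → ℝ) (p : Pol → ℝ) (ν : Mod × Pol → ℝ) : EReal :=
  ((∑ π : Pol, ∑ mp : Mod × Pol, p π * ν mp * (V mp.1 mp.2 - V mp.1 π) : ℝ) : EReal)
    - ((η⁻¹ : ℝ) : EReal) *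
        ∑ π : Pol, ∑ mp : Mod × Pol, ∑ o : Obs,
          ((p π * ν mp * q mp.1 π o : ℝ) : EReal) * KL (post q part ν π o) ρ

/-- `max_{ρ∈Δ(Φ)} max_{ν∈Δ(Ψ)} min_{p∈Δ(Π)} AIR^Φ_{ρ,η}(p,ν)`. -/
def AIRmaxmin (q : Mod → Pol → Obs → ℝ) (V : Mod → Pol → ℝ)
    (part : Mod × Pol → Option I) (η : ℝ) : EReal :=
  ⨆ ρ : FDist I, ⨆ ν : {ν : FDist (Mod × Pol) // ∀ mp, part mp = none → ν.p mp = 0},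
    ⨅ p : FDist Pol, AIR q V part η ρ.p p.p ν.1.p

/-- Observation distribution of the mixture model `M^μ`. -/
def mixObs (q : Mod → Pol → Obs → ℝ) (μ : Mod → ℝ) (π : Pol) : Obs → ℝ := fun o =>
  ∑ m : Mod, μ m * q m π o

/-- Observation distribution of the mixture of the model-marginal of `ν ∈ Δ(𝓜 × Π)`. -/
def pairMixObs (q : Mod → Pol → Obs → ℝ) (ν : Mod × Pol → ℝ) (π : Pol) : Obs → ℝ := fun o =>
  ∑ mp : Mod × Pol, ν mp * q mp.1 π o

/-- The `Φ`-dependent DEC, `DEC^KL_η(𝓜, Φ)`. -/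
def DECPhi (q : Mod → Pol → Obs → ℝ) (V : Mod → Pol → ℝ)
    (part : Mod × Pol → Option I) (η : ℝ) : EReal :=
  ⨆ μbar : FDist Mod, ⨅ p : FDist Pol, ⨆ i : I,
    ⨆ ν : {ν : FDist (Mod × Pol) // ∀ mp, ν.p mp ≠ 0 → part mp = some i},
      ((∑ π : Pol, p.p π *
          ((∑ mp : Mod × Pol, ν.1.p mp * V mp.1 mp.2)
            - (∑ mp : Mod × Pol, ν.1.p mp * V mp.1 π)) : ℝ) : EReal)
        - ((η⁻¹ : ℝ) : EReal) *
            ∑ π : Pol, ((p.p π : ℝ) : EReal) * KL (pairMixObs q ν.1.p π) (mixObs q μbar.p π)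

/-- `C(Φ) = max_{φ∈Φ} max_{ν∈Δ(φ)} (E_{(M,π⋆)∼ν}[V_M(π⋆)] − max_π V_{M^ν}(π))`. -/
def CPhi (V : Mod → Pol → ℝ) (part : Mod × Pol → Option I) : ℝ :=
  ⨆ i : I, ⨆ ν : {ν : FDist (Mod × Pol) // ∀ mp, ν.p mp ≠ 0 → part mp = some i},
    ((∑ mp : Mod × Pol, ν.1.p mp * V mp.1 mp.2)
      - ⨆ π : Pol, ∑ mp : Mod × Pol, ν.1.p mp * V mp.1 π)

/-- `DEC^KL_η(𝓜̄(Φ))`: the DEC of the `Φ`-aware convexification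
`𝓜̄(Φ) = ⋃_{φ∈Φ} co({M : (M,π) ∈ φ for some π})`. -/
def DECbar (q : Mod → Pol → Obs → ℝ) (V : Mod → Pol → ℝ)
    (part : Mod × Pol → Option I) (η : ℝ) : EReal :=
  ⨆ μbar : {μ : FDist Mod // ∀ m, μ.p m ≠ 0 → ∃ i : I, ∃ π : Pol, part (m, π) = some i},
    ⨅ p : FDist Pol, ⨆ i : I,
      ⨆ μ : {μ : FDist Mod // ∀ m, μ.p m ≠ 0 → ∃ π : Pol, part (m, π) = some i},
        ((∑ π : Pol, p.p π *
            ((⨆ π' : Pol, ∑ m : Mod, μ.1.p m * V m π') - ∑ m : Mod, μ.1.p m * V m π) : ℝ) : EReal)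
          - ((η⁻¹ : ℝ) : EReal) *
              ∑ π : Pol, ((p.p π : ℝ) : EReal) * KL (mixObs q μ.1.p π) (mixObs q μbar.1.p π)

/-- `DEC^KL_η(𝓜)` for the class of pure models. -/
def DECpure (q : Mod → Pol → Obs → ℝ) (V : Mod → Pol → ℝ) (η : ℝ) : EReal :=
  ⨆ μbar : FDist Mod, ⨅ p : FDist Pol, ⨆ m : Mod,
    ((∑ π : Pol, p.p π * ((⨆ π' : Pol, V m π') - V m π) : ℝ) : EReal)
      - ((η⁻¹ : ℝ) : EReal) * ∑ π : Pol, ((p.p π : ℝ) : EReal) * KL (q m π) (mixObs q μbar.p π)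

/-- `DEC^KL_η(𝓜̄(Θ))` for a total partition `Θ` of the models. -/
def DECbarTheta (q : Mod → Pol → Obs → ℝ) (V : Mod → Pol → ℝ)
    (partM : Mod → I) (η : ℝ) : EReal :=
  ⨆ μbar : FDist Mod, ⨅ p : FDist Pol, ⨆ i : I,
    ⨆ μ : {μ : FDist Mod // ∀ m, μ.p m ≠ 0 → partM m = i},
      ((∑ π : Pol, p.p π *
          ((⨆ π' : Pol, ∑ m : Mod, μ.1.p m * V m π') - ∑ m : Mod, μ.1.p m * V m π) : ℝ) : EReal)
        - ((η⁻¹ : ℝ) : EReal) *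
            ∑ π : Pol, ((p.p π : ℝ) : EReal) * KL (mixObs q μ.1.p π) (mixObs q μbar.p π)

/-- Posterior over a model partition `Θ` given prior `ν` on models. -/
def postM (q : Mod → Pol → Obs → ℝ) (partM : Mod → I) (ν : Mod → ℝ)
    (π : Pol) (o : Obs) : I → ℝ := fun i =>
  (∑ m : Mod, if partM m = i then ν m * q m π o else 0) / (∑ m : Mod, ν m * q m π o)

/-- `InfoAIR^Θ_{ρ,η}(p, ν, π^Θ)`. -/
def InfoAIR (q : Mod → Pol → Obs → ℝ) (V : Mod → Pol → ℝ) (partM : Mod → I)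
    (η : ℝ) (ρ : I → ℝ) (p : Pol → ℝ) (ν : Mod → ℝ) (πΘ : I → Pol) : EReal :=
  ((∑ π : Pol, ∑ m : Mod, p π * ν m * (V m (πΘ (partM m)) - V m π) : ℝ) : EReal)
    - ((η⁻¹ : ℝ) : EReal) *
        ∑ π : Pol, ∑ m : Mod, ∑ o : Obs,
          ((p π * ν m * q m π o : ℝ) : EReal) * KL (postM q partM ν π o) ρ

end GeneralDM

/-!
The mutual information between the cell of `(M, π⋆)` and the observation is the least divergence of
their joint law from a product. Both sides of the theorem are therefore governed by one zero-sum
game on `Δ(Π) × Δ(Ψ)`, whose payoff measures the joint law against the cell law of `ν` times a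
reference observation law: at its best `ρ`, `AIR` is this payoff with the observation law of `ν`
itself as reference, and on a single cell the payoff is the objective of the DEC.

The payoff averages, over the cells, the payoffs of the conditional laws of `ν`, so some cell does
at least as well as `ν`; this gives `AIRmaxmin ≤ DECPhi`. For the converse, smooth the reference
mixture of the DEC so that it dominates every model, at an arbitrarily small cost. The payoff is
then linear in `p` and concave and continuous in `ν`, so by Sion's theorem it has a saddle point,
and the `ν`-part of the saddle point is a good choice in `AIRmaxmin`.
-/

section RelativeEntropy

variable {X : Type*} {p q q' : X → ℝ}

/-- Absolute continuity `p ≪ q` of finite weight functions. -/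
def AbsCont (p q : X → ℝ) : Prop := ∀ x, q x = 0 → p x = 0

/-- For `τ > 0` the left side is linear in `(a, b)`, and at `τ = a / b` it equals the right side:
`a * log (a / b)` is a supremum of linear functions. -/
theorem mul_log_add_sub_le_mul_log_div {a b τ : ℝ} (ha : 0 ≤ a) (hb : 0 ≤ b) (hab : b = 0 → a = 0)
    (hτ : 0 < τ) : a * Real.log τ + a - b * τ ≤ a * Real.log (a / b) := by
  rcases ha.eq_or_lt with rfl | ha
  · simp only [zero_mul, zero_add, zero_sub, Left.neg_nonpos_iff]
    positivity
  · have hb : 0 < b := hb.lt_of_ne fun h => ha.ne' (hab h.symm)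
    have hlog := Real.one_sub_inv_le_log_of_pos (show 0 < a / b / τ by positivity)
    rw [Real.log_div (by positivity) hτ.ne'] at hlog
    have hmul := mul_le_mul_of_nonneg_left hlog ha.le
    have heq : a * (1 - (a / b / τ)⁻¹) = a - b * τ := by field_simp
    linarith

theorem convexOn_mul_log_div :
    ConvexOn ℝ {z : ℝ × ℝ | 0 ≤ z.1 ∧ 0 ≤ z.2 ∧ (z.2 = 0 → z.1 = 0)}
      fun z => z.1 * Real.log (z.1 / z.2) := by
  have hconv : Convex ℝ {z : ℝ × ℝ | 0 ≤ z.1 ∧ 0 ≤ z.2 ∧ (z.2 = 0 → z.1 = 0)} := by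
    rintro ⟨a, b⟩ ⟨ha, hb, hab⟩ ⟨a', b'⟩ ⟨ha', hb', hab'⟩ s t hs ht -
    simp only [Prod.smul_mk, smul_eq_mul, Prod.mk_add_mk, Set.mem_ofPred_eq] at *
    refine ⟨by positivity, by positivity, fun h => ?_⟩
    rw [add_eq_zero_iff_of_nonneg (by positivity) (by positivity), mul_eq_zero, mul_eq_zero] at h
    rw [mul_eq_zero.2 (h.1.imp_right hab), mul_eq_zero.2 (h.2.imp_right hab'), add_zero]
  refine ⟨hconv, fun x hx y hy s t hs ht hst => ?_⟩
  obtain ⟨ha, hb, hab⟩ := hconv hx hy hs ht hst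
  set z := s • x + t • y
  have hz₁ : z.1 = s * x.1 + t * y.1 := rfl
  have hz₂ : z.2 = s * x.2 + t * y.2 := rfl
  simp only [smul_eq_mul]
  rcases ha.eq_or_lt with h0 | ha
  · obtain ⟨hx0, hy0⟩ := (add_eq_zero_iff_of_nonneg (mul_nonneg hs hx.1) (mul_nonneg ht hy.1)).1
      (hz₁ ▸ h0.symm)
    rw [← h0, ← mul_assoc, ← mul_assoc, hx0, hy0]
    simp
  have hb : 0 < z.2 := hb.lt_of_ne fun h => ha.ne' (hab h.symm)
  have hτ : 0 < z.1 / z.2 := div_pos ha hb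
  have hbτ : z.2 * (z.1 / z.2) = z.1 := mul_div_cancel₀ _ hb.ne'
  calc z.1 * Real.log (z.1 / z.2)
      = s * (x.1 * Real.log (z.1 / z.2) + x.1 - x.2 * (z.1 / z.2)) +
          t * (y.1 * Real.log (z.1 / z.2) + y.1 - y.2 * (z.1 / z.2)) := by
        linear_combination (Real.log (z.1 / z.2) + 1) * hz₁ - (z.1 / z.2) * hz₂ + hbτ
    _ ≤ s * (x.1 * Real.log (x.1 / x.2)) + t * (y.1 * Real.log (y.1 / y.2)) := by
        gcongr
        · exact mul_log_add_sub_le_mul_log_div hx.1 hx.2.1 hx.2.2 hτ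
        · exact mul_log_add_sub_le_mul_log_div hy.1 hy.2.1 hy.2.2 hτ

variable [Fintype X]

/-- The Kullback–Leibler divergence as a real number, with junk value when `¬ AbsCont p q`. -/
def relEntropy (p q : X → ℝ) : ℝ := ∑ x, p x * Real.log (p x / q x)

theorem KL_of_absCont (h : AbsCont p q) : KL p q = relEntropy p q := if_pos h

theorem KL_of_not_absCont (h : ¬ AbsCont p q) : KL p q = ⊤ := if_neg h

theorem relEntropy_eq_sub (h : AbsCont p q) :
    relEntropy p q = ∑ x, p x * Real.log (p x) - ∑ x, p x * Real.log (q x) := by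
  rw [relEntropy, ← Finset.sum_sub_distrib]
  refine Finset.sum_congr rfl fun x _ => ?_
  by_cases hp : p x = 0
  · simp [hp]
  · rw [Real.log_div hp (mt (h x) hp), mul_sub]

theorem relEntropy_nonneg (hp : 0 ≤ p) (hq : 0 ≤ q) (h : AbsCont p q)
    (hsum : ∑ x, q x ≤ ∑ x, p x) : 0 ≤ relEntropy p q :=
  calc (0 : ℝ) ≤ ∑ x, (p x * Real.log 1 + p x - q x * 1) := by
        simpa [Finset.sum_sub_distrib] using hsum
    _ ≤ relEntropy p q := Finset.sum_le_sum fun x _ =>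
        mul_log_add_sub_le_mul_log_div (hp x) (hq x) (h x) one_pos

theorem relEntropy_le_add_of_exp_mul_le {δ : ℝ} (hp : 0 ≤ p) (hq : 0 ≤ q) (h : AbsCont p q)
    (hle : ∀ x, Real.exp (-δ) * q x ≤ q' x) :
    relEntropy p q' ≤ relEntropy p q + δ * ∑ x, p x := by
  rw [relEntropy, relEntropy, Finset.mul_sum, ← Finset.sum_add_distrib]
  refine Finset.sum_le_sum fun x _ => ?_
  rcases (hp x).eq_or_lt with hpx | hpx
  · simp [← hpx]
  have hqx : 0 < q x := (hq x).lt_of_ne fun h0 => hpx.ne' (h x h0.symm)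
  have hexp : 0 < Real.exp (-δ) * q x := by positivity
  have hlog := Real.log_le_log hexp (hle x)
  rw [Real.log_mul (Real.exp_pos _).ne' hqx.ne', Real.log_exp] at hlog
  rw [Real.log_div hpx.ne' (hexp.trans_le (hle x)).ne', Real.log_div hpx.ne' hqx.ne']
  linarith [mul_le_mul_of_nonneg_left hlog hpx.le]

end RelativeEntropy

section WeightedKL

variable {K X : Type*} [Fintype K] [Fintype X] {c : K → ℝ} {P Q : K → X → ℝ}

theorem coe_sum_eq_sum_coe (f : K → ℝ) : ((∑ k, f k : ℝ) : EReal) = ∑ k, (f k : EReal) :=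
  map_sum (⟨⟨Real.toEReal, EReal.coe_zero⟩, EReal.coe_add⟩ : ℝ →+ EReal) f Finset.univ

theorem sum_coe_mul_KL_eq_coe (h : ∀ k, c k ≠ 0 → AbsCont (P k) (Q k)) :
    ∑ k, (c k : EReal) * KL (P k) (Q k) = (∑ k, c k * relEntropy (P k) (Q k) : ℝ) := by
  rw [coe_sum_eq_sum_coe]
  refine Finset.sum_congr rfl fun k _ => ?_
  by_cases hk : c k = 0
  · simp [hk]
  · rw [KL_of_absCont (h k hk), EReal.coe_mul]

theorem sum_coe_mul_KL_eq_top (hc : 0 ≤ c) {k : K} (hk : c k ≠ 0) (h : ¬ AbsCont (P k) (Q k)) :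
    ∑ k, (c k : EReal) * KL (P k) (Q k) = ⊤ := by
  classical
  have hterm_top {j : K} (hj : c j ≠ 0) (hac : ¬ AbsCont (P j) (Q j)) :
      (c j : EReal) * KL (P j) (Q j) = ⊤ := by
    rw [KL_of_not_absCont hac, EReal.coe_mul_top_of_pos ((hc j).lt_of_ne' hj)]
  have hterm_ne_bot (j : K) : (c j : EReal) * KL (P j) (Q j) ≠ ⊥ := by
    by_cases hj : c j = 0
    · simp [hj]
    by_cases hac : AbsCont (P j) (Q j)
    · rw [KL_of_absCont hac, ← EReal.coe_mul]
      exact EReal.coe_ne_bot _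
    · simp [hterm_top hj hac]
  rw [← Finset.add_sum_erase _ _ (Finset.mem_univ k), hterm_top hk h]
  refine EReal.top_add_of_ne_bot fun hbot => ?_
  obtain ⟨j, -, hj⟩ := WithBot.sum_eq_bot_iff.1 hbot
  exact hterm_ne_bot j hj

end WeightedKL

section JointWeights

variable {I O : Type*} {J : I × O → ℝ} {ρ : I → ℝ} {b : O → ℝ}

/-- The marginal of a joint weight function on its first coordinate. -/
def fstMarginal [Fintype O] (J : I × O → ℝ) (i : I) : ℝ := ∑ o, J (i, o)

/-- The marginal of a joint weight function on its second coordinate. -/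
def sndMarginal [Fintype I] (J : I × O → ℝ) (o : O) : ℝ := ∑ i, J (i, o)

/-- The product weight function `ρ ⊗ b`. -/
def prodWeight (ρ : I → ℝ) (b : O → ℝ) (z : I × O) : ℝ := ρ z.1 * b z.2

theorem absCont_fstMarginal [Fintype O] (hJ : 0 ≤ J) : AbsCont J fun z => fstMarginal J z.1 :=
  fun z hz => (Finset.sum_eq_zero_iff_of_nonneg fun o _ => hJ (z.1, o)).1 hz z.2 (Finset.mem_univ _)

theorem absCont_sndMarginal [Fintype I] (hJ : 0 ≤ J) : AbsCont J fun z => sndMarginal J z.2 :=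
  fun z hz => (Finset.sum_eq_zero_iff_of_nonneg fun i _ => hJ (i, z.2)).1 hz z.1 (Finset.mem_univ _)

variable [Fintype I] [Fintype O]

theorem sum_fstMarginal : ∑ i, fstMarginal J i = ∑ z, J z := (Fintype.sum_prod_type J).symm

theorem sum_sndMarginal : ∑ o, sndMarginal J o = ∑ z, J z := (Fintype.sum_prod_type_right J).symm

theorem absCont_prodWeight (hJ : 0 ≤ J) (hρ : AbsCont (fstMarginal J) ρ)
    (hb : AbsCont (sndMarginal J) b) : AbsCont J (prodWeight ρ b) := fun z hz =>
  (mul_eq_zero.1 hz).elim (fun h => absCont_fstMarginal hJ z (hρ _ h))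
    fun h => absCont_sndMarginal hJ z (hb _ h)

theorem relEntropy_prodWeight (hJ : 0 ≤ J) (hρ : AbsCont (fstMarginal J) ρ)
    (hb : AbsCont (sndMarginal J) b) :
    relEntropy J (prodWeight ρ b) = ∑ z, J z * Real.log (J z) -
      ∑ i, fstMarginal J i * Real.log (ρ i) - ∑ o, sndMarginal J o * Real.log (b o) := by
  have hlog (z : I × O) : J z * Real.log (prodWeight ρ b z) =
      J z * Real.log (ρ z.1) + J z * Real.log (b z.2) := by
    by_cases hz : J z = 0
    · simp [hz]
    · rw [prodWeight, Real.log_mul (mt (hρ _) (mt (absCont_fstMarginal hJ z) hz))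
        (mt (hb _) (mt (absCont_sndMarginal hJ z) hz)), mul_add]
  have hfst : ∑ z, J z * Real.log (ρ z.1) = ∑ i, fstMarginal J i * Real.log (ρ i) := by
    simp only [Fintype.sum_prod_type, fstMarginal, Finset.sum_mul]
  have hsnd : ∑ z, J z * Real.log (b z.2) = ∑ o, sndMarginal J o * Real.log (b o) := by
    simp only [Fintype.sum_prod_type_right, sndMarginal, Finset.sum_mul]
  rw [relEntropy_eq_sub (absCont_prodWeight hJ hρ hb), Finset.sum_congr rfl fun z _ => hlog z,
    Finset.sum_add_distrib, hfst, hsnd, sub_sub]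

theorem relEntropy_prodWeight_eq_add (hJ : 0 ≤ J) (hρ : AbsCont (fstMarginal J) ρ)
    (hb : AbsCont (sndMarginal J) b) :
    relEntropy J (prodWeight ρ b) = relEntropy J (prodWeight (fstMarginal J) (sndMarginal J)) +
      relEntropy (fstMarginal J) ρ + relEntropy (sndMarginal J) b := by
  rw [relEntropy_prodWeight hJ hρ hb, relEntropy_prodWeight hJ (fun _ => id) (fun _ => id),
    relEntropy_eq_sub hρ, relEntropy_eq_sub hb]
  ring

theorem relEntropy_marginals_le (hJ : 0 ≤ J) (hρ0 : 0 ≤ ρ) (hb0 : 0 ≤ b)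
    (hρ : AbsCont (fstMarginal J) ρ) (hb : AbsCont (sndMarginal J) b)
    (hρsum : ∑ i, ρ i ≤ ∑ z, J z) (hbsum : ∑ o, b o ≤ ∑ z, J z) :
    relEntropy J (prodWeight (fstMarginal J) (sndMarginal J)) ≤
      relEntropy J (prodWeight ρ b) := by
  have hfst : 0 ≤ relEntropy (fstMarginal J) ρ := relEntropy_nonneg
    (fun _ => Finset.sum_nonneg fun _ _ => hJ _) hρ0 hρ (by rwa [sum_fstMarginal])
  have hsnd : 0 ≤ relEntropy (sndMarginal J) b := relEntropy_nonneg
    (fun _ => Finset.sum_nonneg fun _ _ => hJ _) hb0 hb (by rwa [sum_sndMarginal])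
  linarith [relEntropy_prodWeight_eq_add hJ hρ hb]

theorem sum_sndMarginal_mul_relEntropy_div (hJ : 0 ≤ J) :
    ∑ o, sndMarginal J o * relEntropy (fun i => J (i, o) / sndMarginal J o) ρ =
      relEntropy J (prodWeight ρ (sndMarginal J)) := by
  rw [relEntropy, Fintype.sum_prod_type_right]
  refine Finset.sum_congr rfl fun o _ => ?_
  rw [relEntropy, Finset.mul_sum]
  refine Finset.sum_congr rfl fun i _ => ?_
  by_cases ho : sndMarginal J o = 0
  · simp [ho, absCont_sndMarginal hJ (i, o) ho]
  · rw [prodWeight, div_div, mul_comm (ρ i), ← mul_assoc, mul_div_cancel₀ _ ho]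

theorem sum_fstMarginal_mul_relEntropy_div (hJ : 0 ≤ J) :
    ∑ i, fstMarginal J i * relEntropy (fun o => J (i, o) / fstMarginal J i) b =
      relEntropy J (prodWeight (fstMarginal J) b) := by
  rw [relEntropy, Fintype.sum_prod_type]
  refine Finset.sum_congr rfl fun i _ => ?_
  rw [relEntropy, Finset.mul_sum]
  refine Finset.sum_congr rfl fun o _ => ?_
  by_cases hi : fstMarginal J i = 0
  · simp [hi, absCont_fstMarginal hJ (i, o) hi]
  · rw [prodWeight, div_div, ← mul_assoc, mul_div_cancel₀ _ hi]

end JointWeights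

section Mixtures

variable {X O : Type*} [Fintype X] {k : X → O → ℝ} {ν : X → ℝ}

/-- The law of the output of the channel `k` when its input has law `ν`. -/
def mixture (ν : X → ℝ) (k : X → O → ℝ) (o : O) : ℝ := ∑ x, ν x * k x o

theorem mixture_mem_stdSimplex [Fintype O] (hν : ν ∈ stdSimplex ℝ X)
    (hk : ∀ x, k x ∈ stdSimplex ℝ O) : mixture ν k ∈ stdSimplex ℝ O := by
  have hsum : mixture ν k = ∑ x, ν x • k x := by
    ext o
    simp [mixture, Finset.sum_apply]
  exact hsum ▸ (convex_stdSimplex ℝ O).sum_mem (fun x _ => hν.1 x) hν.2 fun x _ => hk x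

theorem absCont_mixture {b : O → ℝ} (hb : ∀ x, AbsCont (k x) b) : AbsCont (mixture ν k) b :=
  fun o ho => Finset.sum_eq_zero fun x _ => by rw [hb x o ho, mul_zero]

theorem absCont_mixture_mixture {μ : X → ℝ} (hμ : 0 ≤ μ) (hk : 0 ≤ k) (h : AbsCont ν μ) :
    AbsCont (mixture ν k) (mixture μ k) := fun o ho => Finset.sum_eq_zero fun x hx => by
  have hzero := (Finset.sum_eq_zero_iff_of_nonneg fun y _ => mul_nonneg (hμ y) (hk y o)).1 ho x hx
  exact (mul_eq_zero.1 hzero).elim (fun h0 => by rw [h x h0, zero_mul])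
    fun h0 => by rw [h0, mul_zero]

theorem absCont_mixture_of_pos {x : X} (hν : 0 ≤ ν) (hk : 0 ≤ k) (hx : 0 < ν x) :
    AbsCont (k x) (mixture ν k) := fun o ho =>
  (mul_eq_zero.1 ((Finset.sum_eq_zero_iff_of_nonneg fun y _ => mul_nonneg (hν y) (hk y o)).1 ho x
    (Finset.mem_univ _))).resolve_left hx.ne'

theorem exists_pos_exp_neg_mul_le {δ : ℝ} (hδ : 0 < δ) (hν : ν ∈ stdSimplex ℝ X) :
    ∃ μ ∈ stdSimplex ℝ X, (∀ x, 0 < μ x) ∧ ∀ x, Real.exp (-δ) * ν x ≤ μ x := by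
  have hexp : 0 < 1 - Real.exp (-δ) := by simpa using hδ
  have hcard : 0 < (Fintype.card X : ℝ) := by
    rw [Nat.cast_pos, Fintype.card_pos_iff]
    by_contra hX
    rw [not_nonempty_iff] at hX
    simpa using hν.2
  have huniform : 0 < (1 - Real.exp (-δ)) / Fintype.card X := div_pos hexp hcard
  have hν₀ (x : X) : 0 ≤ Real.exp (-δ) * ν x := mul_nonneg (Real.exp_pos _).le (hν.1 x)
  refine ⟨fun x => Real.exp (-δ) * ν x + (1 - Real.exp (-δ)) / Fintype.card X,
    ⟨fun x => add_nonneg (hν₀ x) huniform.le, ?_⟩,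
    fun x => add_pos_of_nonneg_of_pos (hν₀ x) huniform, fun x => le_add_of_nonneg_right huniform.le⟩
  rw [Finset.sum_add_distrib, ← Finset.mul_sum, hν.2, Finset.sum_const, Finset.card_univ,
    nsmul_eq_mul, mul_div_cancel₀ _ hcard.ne']
  ring

theorem exists_sum_mul_le_of_mem_stdSimplex (hν : ν ∈ stdSimplex ℝ X) (f : X → ℝ) :
    ∃ x, ν x ≠ 0 ∧ ∑ y, ν y * f y ≤ f x := by
  by_contra! hlt
  have hle (x : X) : ν x * f x ≤ ν x * ∑ y, ν y * f y := by
    by_cases hx : ν x = 0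
    · simp [hx]
    · exact mul_le_mul_of_nonneg_left (hlt x hx).le (hν.1 x)
  obtain ⟨x, -, hx⟩ := Finset.exists_ne_zero_of_sum_ne_zero (hν.2.trans_ne one_ne_zero)
  refine (Finset.sum_lt_sum (fun y _ => hle y) ⟨x, Finset.mem_univ x, ?_⟩).ne ?_
  · exact mul_lt_mul_of_pos_left (hlt x hx) ((hν.1 x).lt_of_ne' hx)
  · rw [← Finset.sum_mul, hν.2, one_mul]

end Mixtures

section Cells

variable {X I O : Type*} [Fintype X] {part : X → Option I} {k : X → O → ℝ} {ν : X → ℝ}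

/-- The simplex `Δ(Ψ)` of distributions carried by the union of the cells. -/
def cellSimplex (part : X → Option I) : Set (X → ℝ) :=
  {ν ∈ stdSimplex ℝ X | ∀ x, part x = none → ν x = 0}

theorem convex_cellSimplex : Convex ℝ (cellSimplex part) := by
  rintro ν ⟨hν, hν'⟩ μ ⟨hμ, hμ'⟩ s t hs ht hst
  exact ⟨convex_stdSimplex ℝ X hν hμ hs ht hst, fun x hx => by simp [hν' x hx, hμ' x hx]⟩

theorem isCompact_cellSimplex : IsCompact (cellSimplex part) := by
  have hclosed : IsClosed {ν : X → ℝ | ∀ x, part x = none → ν x = 0} := by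
    simp only [Set.ofPred_forall]
    exact isClosed_iInter fun x => isClosed_iInter fun _ =>
      isClosed_eq (continuous_apply x) continuous_const
  exact (isCompact_stdSimplex ℝ X).inter_right hclosed

theorem mem_cellSimplex_of_concentrated {i : I} (hν : ν ∈ stdSimplex ℝ X)
    (hi : ∀ x, ν x ≠ 0 → part x = some i) : ν ∈ cellSimplex part :=
  ⟨hν, fun x hx => by_contra fun h0 => by simp [hi x h0] at hx⟩

variable [DecidableEq I]

/-- The total weight that `f` gives to cell `i` of the partial partition `part`. -/
def cellSum (part : X → Option I) (f : X → ℝ) (i : I) : ℝ :=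
  ∑ x, if part x = some i then f x else 0

theorem cellSum_nonneg {f : X → ℝ} (hf : 0 ≤ f) : 0 ≤ cellSum part f := fun i =>
  Finset.sum_nonneg fun x _ => by
    split_ifs
    exacts [hf x, le_rfl]

theorem sum_cellSum [Fintype I] {f : X → ℝ} (hf : ∀ x, part x = none → f x = 0) :
    ∑ i, cellSum part f i = ∑ x, f x := by
  simp only [cellSum]
  rw [Finset.sum_comm]
  refine Finset.sum_congr rfl fun x _ => ?_
  cases hx : part x <;> simp [hf, hx]

theorem cellSum_add_smul (f g : X → ℝ) (s t : ℝ) (i : I) :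
    cellSum part (s • f + t • g) i = s * cellSum part f i + t * cellSum part g i := by
  simp only [cellSum, Finset.mul_sum, ← Finset.sum_add_distrib]
  refine Finset.sum_congr rfl fun x _ => ?_
  split_ifs <;> simp

theorem continuous_cellSum (i : I) : Continuous fun f : X → ℝ => cellSum part f i := by
  refine continuous_finsetSum _ fun x _ => ?_
  split_ifs <;> fun_prop

/-- The joint law of the cell of the input and the output of the channel `k`. -/
def jointLaw (part : X → Option I) (k : X → O → ℝ) (ν : X → ℝ) (z : I × O) : ℝ :=
  cellSum part (fun x => ν x * k x z.2) z.1

theorem cellSum_mem_stdSimplex [Fintype I] (hν : ν ∈ cellSimplex part) :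
    cellSum part ν ∈ stdSimplex ℝ I :=
  ⟨cellSum_nonneg hν.1.1, (sum_cellSum hν.2).trans hν.1.2⟩

theorem jointLaw_nonneg (hν : 0 ≤ ν) (hk : 0 ≤ k) : 0 ≤ jointLaw part k ν := fun z =>
  cellSum_nonneg (fun x => mul_nonneg (hν x) (hk x z.2)) z.1

theorem jointLaw_add_smul (ν μ : X → ℝ) (s t : ℝ) (z : I × O) :
    jointLaw part k (s • ν + t • μ) z = s * jointLaw part k ν z + t * jointLaw part k μ z := by
  rw [jointLaw, jointLaw, jointLaw, ← cellSum_add_smul]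
  congr 1
  ext x
  simp only [Pi.add_apply, Pi.smul_apply, smul_eq_mul]
  ring

theorem continuous_jointLaw (z : I × O) : Continuous fun ν : X → ℝ => jointLaw part k ν z :=
  (continuous_cellSum z.1).comp (by fun_prop)

theorem sndMarginal_jointLaw [Fintype I] (hν : ∀ x, part x = none → ν x = 0) :
    sndMarginal (jointLaw part k ν) = mixture ν k :=
  funext fun o => sum_cellSum (f := fun x => ν x * k x o) fun x hx => by simp [hν x hx]

theorem fstMarginal_jointLaw [Fintype O] (hk : ∀ x, ∑ o, k x o = 1) :
    fstMarginal (jointLaw part k ν) = cellSum part ν := by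
  ext i
  simp only [fstMarginal, jointLaw, cellSum]
  rw [Finset.sum_comm]
  refine Finset.sum_congr rfl fun x _ => ?_
  split_ifs
  · rw [← Finset.mul_sum, hk, mul_one]
  · simp

/-- The conditional law of the input given that it lies in cell `i`, with junk value `0` when this
event is null. -/
def cellCond (part : X → Option I) (ν : X → ℝ) (i : I) (x : X) : ℝ :=
  (if part x = some i then ν x else 0) / cellSum part ν i

theorem part_eq_some_of_cellCond_ne_zero {i : I} {x : X} (h : cellCond part ν i x ≠ 0) :
    part x = some i := by
  by_contra hx
  simp [cellCond, hx] at h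

theorem cellCond_mem_stdSimplex {i : I} (hν : 0 ≤ ν) (hi : cellSum part ν i ≠ 0) :
    cellCond part ν i ∈ stdSimplex ℝ X := by
  refine ⟨fun x => div_nonneg ?_ (cellSum_nonneg hν i), ?_⟩
  · split_ifs
    exacts [hν x, le_rfl]
  · simp only [cellCond]
    rw [← Finset.sum_div]
    exact div_self hi

theorem eq_zero_of_cellSum_eq_zero {i : I} {x : X} (hν : 0 ≤ ν) (h : cellSum part ν i = 0)
    (hx : part x = some i) : ν x = 0 := by
  refine (if_pos hx).symm.trans
    ((Finset.sum_eq_zero_iff_of_nonneg fun y _ => ?_).1 h x (Finset.mem_univ _))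
  split_ifs
  exacts [hν y, le_rfl]

theorem cellSum_mul_sum_cellCond_mul (hν : 0 ≤ ν) (i : I) (f : X → ℝ) :
    cellSum part ν i * ∑ x, cellCond part ν i x * f x = cellSum part (fun x => ν x * f x) i := by
  simp only [cellCond, Finset.mul_sum]
  refine Finset.sum_congr rfl fun x _ => ?_
  split_ifs with hx
  · by_cases hi : cellSum part ν i = 0
    · simp [eq_zero_of_cellSum_eq_zero hν hi hx]
    · rw [← mul_assoc, mul_div_cancel₀ _ hi]
  · simp

theorem sum_cellSum_mul_sum_cellCond_mul [Fintype I] (hν : ν ∈ cellSimplex part) (f : X → ℝ) :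
    ∑ i, cellSum part ν i * ∑ x, cellCond part ν i x * f x = ∑ x, ν x * f x := by
  simp only [cellSum_mul_sum_cellCond_mul hν.1.1]
  exact sum_cellSum fun x hx => by rw [hν.2 x hx, zero_mul]

theorem mixture_cellCond (i : I) (o : O) :
    mixture (cellCond part ν i) k o = jointLaw part k ν (i, o) / cellSum part ν i := by
  rw [mixture, jointLaw, cellSum, Finset.sum_div]
  refine Finset.sum_congr rfl fun x _ => ?_
  rw [cellCond, div_mul_eq_mul_div, ite_mul, zero_mul]

theorem cellSum_of_concentrated {i : I} (hν : ν ∈ stdSimplex ℝ X)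
    (hi : ∀ x, ν x ≠ 0 → part x = some i) : cellSum part ν = Pi.single i 1 := by
  ext j
  rw [Pi.single_apply, cellSum]
  split_ifs with hij
  · rw [← hν.2, hij]
    exact Finset.sum_congr rfl fun x _ =>
      ite_eq_left_iff.2 fun hx => (not_imp_comm.1 (hi x) hx).symm
  · refine Finset.sum_eq_zero fun x _ => ite_eq_right_iff.2 fun hx => by_contra fun h0 => hij ?_
    exact Option.some_injective _ (hx.symm.trans (hi x h0))

theorem cellCond_of_concentrated {i : I} (hν : ν ∈ stdSimplex ℝ X)
    (hi : ∀ x, ν x ≠ 0 → part x = some i) : cellCond part ν i = ν := by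
  ext x
  rw [cellCond, cellSum_of_concentrated hν hi, Pi.single_eq_same, div_one]
  exact ite_eq_left_iff.2 fun hx => (not_imp_comm.1 (hi x) hx).symm

theorem absCont_jointLaw {ρ : I → ℝ} {b : O → ℝ} (hν : 0 ≤ ν) (hk : 0 ≤ k)
    (hρ : AbsCont (cellSum part ν) ρ) (hb : AbsCont (mixture ν k) b) :
    AbsCont (jointLaw part k ν) (prodWeight ρ b) := by
  refine fun z hz => Finset.sum_eq_zero fun x _ => ite_eq_right_iff.2 fun hx => ?_
  rcases mul_eq_zero.1 hz with hz | hz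
  · exact mul_eq_zero_of_left (eq_zero_of_cellSum_eq_zero hν (hρ _ hz) hx) _
  · exact (Finset.sum_eq_zero_iff_of_nonneg fun y _ => mul_nonneg (hν y) (hk y z.2)).1 (hb _ hz) x
      (Finset.mem_univ _)

variable [Fintype I] [Fintype O] {b : O → ℝ}

/-- The divergence of the joint law of cell and output from the product of the law of the cell and
a reference law `b` of the output. -/
def cellInfo (part : X → Option I) (k : X → O → ℝ) (b : O → ℝ) (ν : X → ℝ) : ℝ :=
  relEntropy (jointLaw part k ν) (prodWeight (cellSum part ν) b)

theorem convexOn_cellInfo (hk : ∀ x, k x ∈ stdSimplex ℝ O) (hb₀ : 0 ≤ b)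
    (hb : ∀ x, AbsCont (k x) b) : ConvexOn ℝ (cellSimplex part) (cellInfo part k b) := by
  refine ⟨convex_cellSimplex, fun ν hν μ hμ s t hs ht hst => ?_⟩
  have hmem {ν : X → ℝ} (hν : ν ∈ cellSimplex part) (z : I × O) :
      (jointLaw part k ν z, prodWeight (cellSum part ν) b z) ∈
        {z : ℝ × ℝ | 0 ≤ z.1 ∧ 0 ≤ z.2 ∧ (z.2 = 0 → z.1 = 0)} :=
    ⟨jointLaw_nonneg hν.1.1 (fun x => (hk x).1) z,
      mul_nonneg (cellSum_nonneg hν.1.1 z.1) (hb₀ z.2),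
      absCont_jointLaw hν.1.1 (fun x => (hk x).1) (fun _ => id) (absCont_mixture hb) z⟩
  simp only [cellInfo, relEntropy, Finset.smul_sum, ← Finset.sum_add_distrib]
  refine Finset.sum_le_sum fun z _ => ?_
  have hprod : prodWeight (cellSum part (s • ν + t • μ)) b z =
      s * prodWeight (cellSum part ν) b z + t * prodWeight (cellSum part μ) b z := by
    simp only [prodWeight, cellSum_add_smul]
    ring
  rw [jointLaw_add_smul, hprod]
  exact convexOn_mul_log_div.2 (hmem hν z) (hmem hμ z) hs ht hst

theorem continuousOn_cellInfo (hk : ∀ x, k x ∈ stdSimplex ℝ O) (hb : ∀ x, AbsCont (k x) b) :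
    ContinuousOn (cellInfo part k b) (cellSimplex part) := by
  have hcont : Continuous fun ν : X → ℝ =>
      ∑ z, jointLaw part k ν z * Real.log (jointLaw part k ν z) -
        ∑ i, cellSum part ν i * Real.log (cellSum part ν i) -
        ∑ o, mixture ν k o * Real.log (b o) := by
    refine ((continuous_finsetSum _ fun z _ => ?_).sub (continuous_finsetSum _ fun i _ => ?_)).sub
      (by unfold mixture; fun_prop)
    · exact Real.continuous_mul_log.comp (continuous_jointLaw z)
    · exact Real.continuous_mul_log.comp (continuous_cellSum i)
  refine hcont.continuousOn.congr fun ν hν => ?_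
  have hfst : fstMarginal (jointLaw part k ν) = cellSum part ν :=
    fstMarginal_jointLaw fun x => (hk x).2
  have hsnd : sndMarginal (jointLaw part k ν) = mixture ν k := sndMarginal_jointLaw hν.2
  rw [cellInfo, relEntropy_prodWeight (jointLaw_nonneg hν.1.1 fun x => (hk x).1)
    (hfst ▸ fun _ => id) (hsnd ▸ absCont_mixture hb), hfst, hsnd]

theorem cellInfo_eq_sum (hν : 0 ≤ ν) (hk : ∀ x, k x ∈ stdSimplex ℝ O) :
    cellInfo part k b ν =
      ∑ i, cellSum part ν i * relEntropy (mixture (cellCond part ν i) k) b := by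
  have hfst : fstMarginal (jointLaw part k ν) = cellSum part ν :=
    fstMarginal_jointLaw fun x => (hk x).2
  rw [cellInfo, ← hfst,
    ← sum_fstMarginal_mul_relEntropy_div (jointLaw_nonneg hν fun x => (hk x).1), hfst]
  simp only [funext (mixture_cellCond _)]

theorem relEntropy_jointLaw_marginals_le {ρ : I → ℝ} (hν : ν ∈ cellSimplex part)
    (hk : ∀ x, k x ∈ stdSimplex ℝ O) (hρ : ρ ∈ stdSimplex ℝ I) (hb : b ∈ stdSimplex ℝ O)
    (hνρ : AbsCont (cellSum part ν) ρ) (hνb : AbsCont (mixture ν k) b) :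
    relEntropy (jointLaw part k ν) (prodWeight (cellSum part ν) (mixture ν k)) ≤
      relEntropy (jointLaw part k ν) (prodWeight ρ b) := by
  have hfst : fstMarginal (jointLaw part k ν) = cellSum part ν :=
    fstMarginal_jointLaw fun x => (hk x).2
  have hsnd : sndMarginal (jointLaw part k ν) = mixture ν k := sndMarginal_jointLaw hν.2
  have hsum : ∑ z, jointLaw part k ν z = 1 := by
    rw [← sum_fstMarginal, hfst, (cellSum_mem_stdSimplex hν).2]
  rw [← hfst] at hνρ
  rw [← hsnd] at hνb
  rw [← hfst, ← hsnd]
  exact relEntropy_marginals_le (jointLaw_nonneg hν.1.1 fun x => (hk x).1) hρ.1 hb.1 hνρ hνb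
    (hρ.2.trans hsum.symm).le (hb.2.trans hsum.symm).le

theorem cellInfo_of_concentrated {i : I} (hν : ν ∈ stdSimplex ℝ X)
    (hk : ∀ x, k x ∈ stdSimplex ℝ O) (hi : ∀ x, ν x ≠ 0 → part x = some i) :
    cellInfo part k b ν = relEntropy (mixture ν k) b := by
  rw [cellInfo_eq_sum hν.1 hk, cellSum_of_concentrated hν hi]
  simp [Pi.single_apply, cellCond_of_concentrated hν hi]

theorem cellInfo_eq_sum_cellInfo_cellCond (hν : 0 ≤ ν) (hk : ∀ x, k x ∈ stdSimplex ℝ O) :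
    cellInfo part k b ν = ∑ i, cellSum part ν i * cellInfo part k b (cellCond part ν i) := by
  rw [cellInfo_eq_sum hν hk]
  refine Finset.sum_congr rfl fun i _ => ?_
  by_cases hi : cellSum part ν i = 0
  · rw [hi, zero_mul, zero_mul]
  · rw [cellInfo_of_concentrated (cellCond_mem_stdSimplex hν hi) hk
      fun x => part_eq_some_of_cellCond_ne_zero]

end Cells

section Game

variable {Pol Obs Mod I : Type*} {q : Mod → Pol → Obs → ℝ}
  {V : Mod → Pol → ℝ} {part : Mod × Pol → Option I} {η : ℝ} {ρ : I → ℝ} {b b' : Pol → Obs → ℝ}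
  {p : Pol → ℝ} {ν : Mod × Pol → ℝ}

theorem FDist.mem_stdSimplex {X : Type*} [Fintype X] (ν : FDist X) : ν.p ∈ stdSimplex ℝ X :=
  ⟨ν.nonneg, ν.sum_one⟩

/-- The kernel `(M, π⋆) ↦ M(· | π)`. -/
def pairKernel (q : Mod → Pol → Obs → ℝ) (π : Pol) (mp : Mod × Pol) : Obs → ℝ := q mp.1 π

theorem pairKernel_mem_stdSimplex [Fintype Obs] (hq : ∀ m π, q m π ∈ stdSimplex ℝ Obs) (π : Pol)
    (mp : Mod × Pol) : pairKernel q π mp ∈ stdSimplex ℝ Obs := hq mp.1 π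

variable [Fintype Mod]

theorem mixObs_mem_stdSimplex [Fintype Obs] {μ : Mod → ℝ} (hq : ∀ m π, q m π ∈ stdSimplex ℝ Obs)
    (hμ : μ ∈ stdSimplex ℝ Mod) (π : Pol) : mixObs q μ π ∈ stdSimplex ℝ Obs :=
  mixture_mem_stdSimplex hμ fun m => hq m π

theorem mul_mixObs_le_mixObs {μ μ' : Mod → ℝ} {c : ℝ} (hq : 0 ≤ q)
    (hle : ∀ m, c * μ m ≤ μ' m) (π : Pol) (o : Obs) :
    c * mixObs q μ π o ≤ mixObs q μ' π o := by
  rw [mixObs, mixObs, Finset.mul_sum]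
  refine Finset.sum_le_sum fun m _ => ?_
  rw [← mul_assoc]
  exact mul_le_mul_of_nonneg_right (hle m) (hq m π o)

variable [Fintype Pol]

/-- The expectation of `V_M(π⋆) - V_M(π)` for `(M, π⋆) ∼ ν`. -/
def regret (V : Mod → Pol → ℝ) (ν : Mod × Pol → ℝ) (π : Pol) : ℝ :=
  ∑ mp, ν mp * (V mp.1 mp.2 - V mp.1 π)

/-- The law on models induced by a law on pairs `(M, π⋆)`. -/
def modelMarginal (ν : FDist (Mod × Pol)) : FDist Mod where
  p m := ∑ π, ν.p (m, π)
  nonneg _ := Finset.sum_nonneg fun _ _ => ν.nonneg _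
  sum_one := by rw [← Fintype.sum_prod_type, ν.sum_one]

theorem mixObs_modelMarginal (ν : FDist (Mod × Pol)) (π : Pol) :
    mixObs q (modelMarginal ν).p π = mixture ν.p (pairKernel q π) := by
  ext o
  simp only [mixObs, modelMarginal, mixture, pairKernel, Fintype.sum_prod_type, Finset.sum_mul]

variable [DecidableEq I]

theorem post_eq_jointLaw_div (π : Pol) (o : Obs) : post q part ν π o = fun i =>
    jointLaw part (pairKernel q π) ν (i, o) / mixture ν (pairKernel q π) o := rfl

variable [Fintype Obs] [Fintype I]

/-- The payoff of the game on `Δ(Π) × Δ(Ψ)` with reference observation laws `b`: an `AIR` whose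
information term is measured against `b` and the cell law of `ν` itself. -/
def gameValue (q : Mod → Pol → Obs → ℝ) (V : Mod → Pol → ℝ) (part : Mod × Pol → Option I) (η : ℝ)
    (b : Pol → Obs → ℝ) (p : Pol → ℝ) (ν : Mod × Pol → ℝ) : ℝ :=
  ∑ π, p π * (regret V ν π - η⁻¹ * cellInfo part (pairKernel q π) (b π) ν)

theorem convexOn_gameValue_left :
    ConvexOn ℝ (stdSimplex ℝ Pol) fun p => gameValue q V part η b p ν := by
  refine ⟨convex_stdSimplex ℝ Pol, fun p _ p' _ s t _ _ _ => le_of_eq ?_⟩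
  simp only [gameValue, smul_eq_mul, Pi.add_apply, Pi.smul_apply, Finset.mul_sum,
    ← Finset.sum_add_distrib]
  exact Finset.sum_congr rfl fun π _ => by ring

theorem continuous_gameValue_left : Continuous fun p => gameValue q V part η b p ν := by
  unfold gameValue
  fun_prop

theorem concaveOn_gameValue_right (hq : ∀ m π, q m π ∈ stdSimplex ℝ Obs) (hη : 0 ≤ η) (hp : 0 ≤ p)
    (hb : ∀ π, 0 ≤ b π) (hqb : ∀ m π, AbsCont (q m π) (b π)) :
    ConcaveOn ℝ (cellSimplex part) fun ν => gameValue q V part η b p ν := by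
  refine ⟨convex_cellSimplex, fun ν hν μ hμ s t hs ht hst => ?_⟩
  simp only [gameValue, smul_eq_mul, Finset.mul_sum, ← Finset.sum_add_distrib]
  refine Finset.sum_le_sum fun π _ => ?_
  have hregret : regret V (s • ν + t • μ) π = s * regret V ν π + t * regret V μ π := by
    simp only [regret, Finset.mul_sum, ← Finset.sum_add_distrib]
    refine Finset.sum_congr rfl fun mp _ => ?_
    simp only [Pi.add_apply, Pi.smul_apply, smul_eq_mul]
    ring
  have hinfo := (convexOn_cellInfo (part := part) (pairKernel_mem_stdSimplex hq π)
    (hb π) fun mp => hqb mp.1 π).2 hν hμ hs ht hst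
  have hmul := mul_le_mul_of_nonneg_left hinfo (mul_nonneg (hp π) (inv_nonneg.2 hη))
  simp only [smul_eq_mul] at hmul
  rw [hregret]
  linarith

theorem continuousOn_gameValue_right (hq : ∀ m π, q m π ∈ stdSimplex ℝ Obs)
    (hqb : ∀ m π, AbsCont (q m π) (b π)) :
    ContinuousOn (fun ν => gameValue q V part η b p ν) (cellSimplex part) := by
  refine continuousOn_finsetSum _ fun π _ => continuousOn_const.mul (ContinuousOn.sub ?_ ?_)
  · unfold regret
    fun_prop
  · exact continuousOn_const.mul
      (continuousOn_cellInfo (pairKernel_mem_stdSimplex hq π) fun mp => hqb mp.1 π)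

theorem exists_isSaddlePointOn_gameValue [Nonempty Pol] (hq : ∀ m π, q m π ∈ stdSimplex ℝ Obs)
    (hη : 0 ≤ η) (hb : ∀ π, 0 ≤ b π) (hqb : ∀ m π, AbsCont (q m π) (b π))
    (hne : (cellSimplex part).Nonempty) :
    ∃ p ∈ stdSimplex ℝ Pol, ∃ ν ∈ cellSimplex part,
      IsSaddlePointOn (stdSimplex ℝ Pol) (cellSimplex part) (gameValue q V part η b) p ν := by
  classical
  exact Sion.exists_isSaddlePointOn ⟨_, single_mem_stdSimplex ℝ (Classical.arbitrary Pol)⟩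
    (convex_stdSimplex ℝ Pol) (isCompact_stdSimplex ℝ Pol)
    (fun _ _ => continuous_gameValue_left.continuousOn.lowerSemicontinuousOn)
    (fun _ _ => convexOn_gameValue_left.quasiconvexOn)
    convex_cellSimplex hne isCompact_cellSimplex
    (fun _ _ => (continuousOn_gameValue_right hq hqb).upperSemicontinuousOn)
    fun _ hp => (concaveOn_gameValue_right hq hη hp.1 hb hqb).quasiconcaveOn

theorem gameValue_eq_sum (hq : ∀ m π, q m π ∈ stdSimplex ℝ Obs) (hν : ν ∈ cellSimplex part) :
    gameValue q V part η b p ν =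
      ∑ i, cellSum part ν i * gameValue q V part η b p (cellCond part ν i) := by
  simp only [gameValue, Finset.mul_sum]
  rw [Finset.sum_comm]
  refine Finset.sum_congr rfl fun π _ => ?_
  rw [cellInfo_eq_sum_cellInfo_cellCond hν.1.1 (pairKernel_mem_stdSimplex hq π), regret,
    ← sum_cellSum_mul_sum_cellCond_mul hν, Finset.mul_sum, ← Finset.sum_sub_distrib,
    Finset.mul_sum]
  refine Finset.sum_congr rfl fun i _ => ?_
  rw [regret]
  ring

theorem exists_gameValue_le_cellCond (hq : ∀ m π, q m π ∈ stdSimplex ℝ Obs)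
    (hν : ν ∈ cellSimplex part) :
    ∃ i, cellSum part ν i ≠ 0 ∧
      gameValue q V part η b p ν ≤ gameValue q V part η b p (cellCond part ν i) := by
  rw [gameValue_eq_sum hq hν]
  exact exists_sum_mul_le_of_mem_stdSimplex (cellSum_mem_stdSimplex hν) _

theorem AIR_eq_coe (hq : ∀ m π, q m π ∈ stdSimplex ℝ Obs) (hν : ν ∈ cellSimplex part)
    (hρ : AbsCont (cellSum part ν) ρ) :
    AIR q V part η ρ p ν = (∑ π, p π * (regret V ν π - η⁻¹ *
      relEntropy (jointLaw part (pairKernel q π) ν)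
        (prodWeight ρ (mixture ν (pairKernel q π)))) : ℝ) := by
  have hJ (π : Pol) : 0 ≤ jointLaw part (pairKernel q π) ν :=
    jointLaw_nonneg hν.1.1 fun mp => (pairKernel_mem_stdSimplex hq π mp).1
  have hpost (π : Pol) (o : Obs) : AbsCont (post q part ν π o) ρ := by
    intro i hi
    have hJi := absCont_fstMarginal (hJ π) (i, o)
    rw [fstMarginal_jointLaw fun mp => (pairKernel_mem_stdSimplex hq π mp).2] at hJi
    exact div_eq_zero_iff.2 (Or.inl (hJi (hρ i hi)))
  have hinfo (π : Pol) : ∑ mp : Mod × Pol, ∑ o,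
      p π * ν mp * q mp.1 π o * relEntropy (post q part ν π o) ρ =
        p π * relEntropy (jointLaw part (pairKernel q π) ν)
          (prodWeight ρ (mixture ν (pairKernel q π))) := by
    rw [← sndMarginal_jointLaw hν.2, ← sum_sndMarginal_mul_relEntropy_div (hJ π),
      sndMarginal_jointLaw hν.2, Finset.sum_comm, Finset.mul_sum]
    refine Finset.sum_congr rfl fun o _ => ?_
    rw [mixture, Finset.sum_mul, Finset.mul_sum]
    refine Finset.sum_congr rfl fun mp _ => ?_
    simp only [post_eq_jointLaw_div, mixture, pairKernel, mul_assoc]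
  have hsum := sum_coe_mul_KL_eq_coe (K := Pol × (Mod × Pol) × Obs)
    (c := fun z => p z.1 * ν z.2.1 * q z.2.1.1 z.1 z.2.2)
    (P := fun z => post q part ν z.1 z.2.2) (Q := fun _ => ρ) fun z _ => hpost z.1 z.2.2
  simp only [Fintype.sum_prod_type (α₁ := Pol), Fintype.sum_prod_type (α₁ := Mod × Pol),
    hinfo] at hsum
  rw [AIR, hsum, ← EReal.coe_mul, ← EReal.coe_sub, Finset.mul_sum, ← Finset.sum_sub_distrib]
  refine congrArg _ (Finset.sum_congr rfl fun π _ => ?_)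
  simp only [mul_assoc, ← Finset.mul_sum]
  rw [regret]
  ring

theorem AIR_eq_bot (hq : ∀ m π, q m π ∈ stdSimplex ℝ Obs) (hη : 0 < η)
    (hp : p ∈ stdSimplex ℝ Pol) (hν : 0 ≤ ν) (hρ : ¬ AbsCont (cellSum part ν) ρ) :
    AIR q V part η ρ p ν = ⊥ := by
  obtain ⟨i, hi, hνi⟩ : ∃ i, ρ i = 0 ∧ cellSum part ν i ≠ 0 := by
    simpa [AbsCont] using hρ
  obtain ⟨mp, -, hmp⟩ := Finset.exists_ne_zero_of_sum_ne_zero hνi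
  obtain ⟨hmpi, hνmp⟩ := ite_ne_right_iff.1 hmp
  obtain ⟨π, -, hπ⟩ := Finset.exists_ne_zero_of_sum_ne_zero (hp.2.trans_ne one_ne_zero)
  obtain ⟨o, -, ho⟩ := Finset.exists_ne_zero_of_sum_ne_zero ((hq mp.1 π).2.trans_ne one_ne_zero)
  have hterm (mp : Mod × Pol) : 0 ≤ ν mp * q mp.1 π o := mul_nonneg (hν mp) ((hq mp.1 π).1 o)
  have hpost : ¬ AbsCont (post q part ν π o) ρ := by
    intro h
    have hJ : jointLaw part (pairKernel q π) ν (i, o) = 0 := by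
      refine (div_eq_zero_iff.1 (h i hi)).elim id fun hmix => ?_
      exact Finset.sum_eq_zero fun x hx => ite_eq_right_iff.2 fun _ =>
        (Finset.sum_eq_zero_iff_of_nonneg fun x _ => hterm x).1 hmix x hx
    exact mul_ne_zero hνmp ho
      (eq_zero_of_cellSum_eq_zero (ν := fun mp => ν mp * q mp.1 π o) hterm hJ hmpi)
  have htop := sum_coe_mul_KL_eq_top (K := Pol × (Mod × Pol) × Obs)
    (c := fun z => p z.1 * ν z.2.1 * q z.2.1.1 z.1 z.2.2)
    (P := fun z => post q part ν z.1 z.2.2) (Q := fun _ => ρ) (k := (π, mp, o))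
    (fun z => mul_nonneg (mul_nonneg (hp.1 z.1) (hν z.2.1)) ((hq z.2.1.1 z.1).1 z.2.2))
    (mul_ne_zero (mul_ne_zero hπ hνmp) ho) hpost
  simp only [Fintype.sum_prod_type (α₁ := Pol), Fintype.sum_prod_type (α₁ := Mod × Pol)] at htop
  rw [AIR, htop, EReal.coe_mul_top_of_pos (inv_pos.2 hη), EReal.sub_top]

theorem AIR_le_gameValue (hq : ∀ m π, q m π ∈ stdSimplex ℝ Obs) (hη : 0 < η)
    (hp : p ∈ stdSimplex ℝ Pol) (hρ : ρ ∈ stdSimplex ℝ I) (hν : ν ∈ cellSimplex part) :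
    AIR q V part η ρ p ν ≤
      gameValue q V part η (fun π => mixture ν (pairKernel q π)) p ν := by
  by_cases hac : AbsCont (cellSum part ν) ρ
  · rw [AIR_eq_coe hq hν hac, EReal.coe_le_coe_iff]
    refine Finset.sum_le_sum fun π _ => mul_le_mul_of_nonneg_left (sub_le_sub_left
      (mul_le_mul_of_nonneg_left ?_ (inv_nonneg.2 hη.le)) _) (hp.1 π)
    exact relEntropy_jointLaw_marginals_le hν (pairKernel_mem_stdSimplex hq π) hρ
      (mixture_mem_stdSimplex hν.1 (pairKernel_mem_stdSimplex hq π)) hac fun _ => id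
  · rw [AIR_eq_bot hq hη hp hν.1.1 hac]
    exact bot_le

theorem gameValue_le_AIR_cellSum (hq : ∀ m π, q m π ∈ stdSimplex ℝ Obs) (hη : 0 ≤ η)
    (hp : 0 ≤ p) (hν : ν ∈ cellSimplex part) (hb : ∀ π, b π ∈ stdSimplex ℝ Obs)
    (hqb : ∀ m π, AbsCont (q m π) (b π)) :
    gameValue q V part η b p ν ≤ AIR q V part η (cellSum part ν) p ν := by
  rw [AIR_eq_coe hq hν fun _ => id, EReal.coe_le_coe_iff]
  refine Finset.sum_le_sum fun π _ => mul_le_mul_of_nonneg_left (sub_le_sub_left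
    (mul_le_mul_of_nonneg_left ?_ (inv_nonneg.2 hη)) _) (hp π)
  exact relEntropy_jointLaw_marginals_le hν (pairKernel_mem_stdSimplex hq π)
    (cellSum_mem_stdSimplex hν) (hb π) (fun _ => id) (absCont_mixture fun mp => hqb mp.1 π)

/-- The objective of `DECPhi` with reference observation laws `b` in place of those of a mixture
model. -/
def decObjective (q : Mod → Pol → Obs → ℝ) (V : Mod → Pol → ℝ) (η : ℝ) (b : Pol → Obs → ℝ)
    (p : Pol → ℝ) (ν : Mod × Pol → ℝ) : EReal :=
  ((∑ π : Pol, p π *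
      ((∑ mp : Mod × Pol, ν mp * V mp.1 mp.2) - (∑ mp : Mod × Pol, ν mp * V mp.1 π)) : ℝ) : EReal)
    - ((η⁻¹ : ℝ) : EReal) * ∑ π : Pol, ((p π : ℝ) : EReal) * KL (pairMixObs q ν π) (b π)

theorem decObjective_eq_coe {i : I} (hq : ∀ m π, q m π ∈ stdSimplex ℝ Obs)
    (hν : ν ∈ stdSimplex ℝ (Mod × Pol)) (hi : ∀ mp, ν mp ≠ 0 → part mp = some i)
    (hb : ∀ π, p π ≠ 0 → AbsCont (mixture ν (pairKernel q π)) (b π)) :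
    decObjective q V η b p ν = gameValue q V part η b p ν := by
  have hKL := sum_coe_mul_KL_eq_coe (P := fun π => pairMixObs q ν π) hb
  rw [decObjective, hKL, ← EReal.coe_mul, ← EReal.coe_sub, Finset.mul_sum,
    ← Finset.sum_sub_distrib, gameValue]
  refine congrArg _ (Finset.sum_congr rfl fun π _ => ?_)
  have hobs : pairMixObs q ν π = mixture ν (pairKernel q π) := rfl
  rw [cellInfo_of_concentrated hν (pairKernel_mem_stdSimplex hq π) hi, regret, hobs]
  simp only [mul_sub, Finset.sum_sub_distrib]
  ring

theorem decObjective_eq_bot {π : Pol} (hη : 0 < η) (hp : 0 ≤ p) (hπ : p π ≠ 0)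
    (h : ¬ AbsCont (mixture ν (pairKernel q π)) (b π)) : decObjective q V η b p ν = ⊥ := by
  rw [decObjective, sum_coe_mul_KL_eq_top hp hπ h, EReal.coe_mul_top_of_pos (inv_pos.2 hη),
    EReal.sub_top]

theorem gameValue_le_gameValue_add {i : I} {δ : ℝ} (hq : ∀ m π, q m π ∈ stdSimplex ℝ Obs)
    (hη : 0 ≤ η) (hp : p ∈ stdSimplex ℝ Pol) (hν : ν ∈ stdSimplex ℝ (Mod × Pol))
    (hi : ∀ mp, ν mp ≠ 0 → part mp = some i) (hb : ∀ π, 0 ≤ b π)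
    (hνb : ∀ π, p π ≠ 0 → AbsCont (mixture ν (pairKernel q π)) (b π))
    (hle : ∀ π o, Real.exp (-δ) * b π o ≤ b' π o) :
    gameValue q V part η b p ν ≤ gameValue q V part η b' p ν + η⁻¹ * δ := by
  calc gameValue q V part η b p ν
      ≤ ∑ π, (p π * (regret V ν π - η⁻¹ * cellInfo part (pairKernel q π) (b' π) ν) +
          p π * (η⁻¹ * δ)) := by
        refine Finset.sum_le_sum fun π _ => ?_
        rw [← mul_add]
        by_cases hπ : p π = 0
        · simp [hπ]
        have hmix := mixture_mem_stdSimplex hν (pairKernel_mem_stdSimplex hq π)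
        have hinfo := relEntropy_le_add_of_exp_mul_le hmix.1 (hb π) (hνb π hπ) (hle π)
        rw [hmix.2, mul_one] at hinfo
        refine mul_le_mul_of_nonneg_left ?_ (hp.1 π)
        simp only [cellInfo_of_concentrated hν (pairKernel_mem_stdSimplex hq π) hi]
        linarith [mul_le_mul_of_nonneg_left hinfo (inv_nonneg.2 hη)]
    _ = gameValue q V part η b' p ν + η⁻¹ * δ := by
        rw [Finset.sum_add_distrib, ← Finset.sum_mul, hp.2, one_mul, gameValue]

theorem decObjective_le_gameValue_add {i : I} {δ : ℝ} (hq : ∀ m π, q m π ∈ stdSimplex ℝ Obs)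
    (hη : 0 < η) (hp : p ∈ stdSimplex ℝ Pol) (hν : ν ∈ stdSimplex ℝ (Mod × Pol))
    (hi : ∀ mp, ν mp ≠ 0 → part mp = some i) (hb : ∀ π, 0 ≤ b π)
    (hle : ∀ π o, Real.exp (-δ) * b π o ≤ b' π o) :
    decObjective q V η b p ν ≤ (gameValue q V part η b' p ν + η⁻¹ * δ : ℝ) := by
  by_cases hνb : ∀ π, p π ≠ 0 → AbsCont (mixture ν (pairKernel q π)) (b π)
  · rw [decObjective_eq_coe hq hν hi hνb, EReal.coe_le_coe_iff]
    exact gameValue_le_gameValue_add hq hη.le hp hν hi hb hνb hle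
  · push Not at hνb
    obtain ⟨π, hπ, hac⟩ := hνb
    rw [decObjective_eq_bot hη hp.1 hπ hac]
    exact bot_le

theorem gameValue_cellCond_eq_decObjective {i : I} (hq : ∀ m π, q m π ∈ stdSimplex ℝ Obs)
    (hν : 0 ≤ ν) (hi : cellSum part ν i ≠ 0) :
    gameValue q V part η (fun π => mixture ν (pairKernel q π)) p (cellCond part ν i) =
      decObjective q V η (fun π => mixture ν (pairKernel q π)) p (cellCond part ν i) := by
  refine (decObjective_eq_coe hq (cellCond_mem_stdSimplex hν hi)
    (fun _ => part_eq_some_of_cellCond_ne_zero) fun π _ => ?_).symm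
  exact absCont_mixture_mixture hν (fun mp => (pairKernel_mem_stdSimplex hq π mp).1)
    fun mp hmp => by simp [cellCond, hmp]

theorem AIRmaxmin_le_DECPhi (hq : ∀ m π, q m π ∈ stdSimplex ℝ Obs) (hη : 0 < η) :
    AIRmaxmin q V part η ≤ DECPhi q V part η := by
  refine iSup_le fun ρ => iSup_le fun ⟨ν, hν⟩ => ?_
  refine le_iSup_of_le (modelMarginal ν) (iInf_mono fun p => ?_)
  have hmem : ν.p ∈ cellSimplex part := ⟨ν.mem_stdSimplex, hν⟩
  have hobs : mixObs q (modelMarginal ν).p = fun π => mixture ν.p (pairKernel q π) :=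
    funext (mixObs_modelMarginal ν)
  obtain ⟨i, hi, hle⟩ := exists_gameValue_le_cellCond (V := V) (η := η) (p := p.p)
    (b := mixObs q (modelMarginal ν).p) hq hmem
  have hcond := cellCond_mem_stdSimplex hmem.1.1 hi
  refine le_iSup_of_le i (le_iSup_of_le ⟨⟨cellCond part ν.p i, hcond.1, hcond.2⟩,
    fun _ => part_eq_some_of_cellCond_ne_zero⟩ ?_)
  calc AIR q V part η ρ.p p.p ν.p
      ≤ gameValue q V part η (mixObs q (modelMarginal ν).p) p.p ν.p := by
        rw [hobs]
        exact AIR_le_gameValue hq hη p.mem_stdSimplex ρ.mem_stdSimplex hmem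
    _ ≤ gameValue q V part η (mixObs q (modelMarginal ν).p) p.p (cellCond part ν.p i) :=
        EReal.coe_le_coe_iff.2 hle
    _ = decObjective q V η (mixObs q (modelMarginal ν).p) p.p (cellCond part ν.p i) := by
        rw [hobs]
        exact gameValue_cellCond_eq_decObjective hq hmem.1.1 hi

theorem exists_forall_gameValue_le_AIRmaxmin [Nonempty Pol]
    (hq : ∀ m π, q m π ∈ stdSimplex ℝ Obs) (hη : 0 ≤ η) (hb : ∀ π, b π ∈ stdSimplex ℝ Obs)
    (hqb : ∀ m π, AbsCont (q m π) (b π)) :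
    ∃ p ∈ stdSimplex ℝ Pol, ∀ ν ∈ cellSimplex part,
      (gameValue q V part η b p ν : EReal) ≤ AIRmaxmin q V part η := by
  rcases (cellSimplex part).eq_empty_or_nonempty with hempty | hne
  · classical
    refine ⟨_, single_mem_stdSimplex ℝ (Classical.arbitrary Pol), ?_⟩
    simp [hempty]
  obtain ⟨p, hp, ν, hν, hsaddle⟩ := exists_isSaddlePointOn_gameValue (V := V) hq hη
    (fun π => (hb π).1) hqb hne
  have hcell := cellSum_mem_stdSimplex hν
  refine ⟨p, hp, fun ν' hν' => le_iSup_of_le ⟨cellSum part ν, hcell.1, hcell.2⟩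
    (le_iSup_of_le ⟨⟨ν, hν.1.1, hν.1.2⟩, hν.2⟩ (le_iInf fun p' => ?_))⟩
  exact (EReal.coe_le_coe_iff.2 (hsaddle p'.p p'.mem_stdSimplex ν' hν')).trans
    (gameValue_le_AIR_cellSum hq hη p'.nonneg hν hb hqb)

theorem DECPhi_le_AIRmaxmin [Nonempty Pol] (hq : ∀ m π, q m π ∈ stdSimplex ℝ Obs) (hη : 0 < η) :
    DECPhi q V part η ≤ AIRmaxmin q V part η := by
  refine iSup_le fun μ => EReal.le_of_forall_lt_iff_le.1 fun z hz => ?_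
  obtain ⟨y, hy, hyz⟩ := EReal.lt_iff_exists_real_btwn.1 hz
  rw [EReal.coe_lt_coe_iff] at hyz
  obtain ⟨μ', hμ', hpos, hle⟩ :=
    exists_pos_exp_neg_mul_le (mul_pos hη (sub_pos.2 hyz)) μ.mem_stdSimplex
  obtain ⟨p, hp, hval⟩ := exists_forall_gameValue_le_AIRmaxmin (V := V) (part := part) hq hη.le
    (mixObs_mem_stdSimplex hq hμ') fun m π =>
      absCont_mixture_of_pos (k := fun m => q m π) hμ'.1 (fun m => (hq m π).1) (hpos m)
  refine iInf_le_of_le ⟨p, hp.1, hp.2⟩ (iSup_le fun i => iSup_le fun ⟨ν, hi⟩ => ?_)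
  have hlt : gameValue q V part η (mixObs q μ') p ν.p < y := EReal.coe_lt_coe_iff.1
    ((hval ν.p (mem_cellSimplex_of_concentrated ν.mem_stdSimplex hi)).trans_lt hy)
  calc decObjective q V η (mixObs q μ.p) p ν.p
      ≤ (gameValue q V part η (mixObs q μ') p ν.p + η⁻¹ * (η * (z - y)) : ℝ) :=
        decObjective_le_gameValue_add hq hη hp ν.mem_stdSimplex hi
          (fun π => (mixObs_mem_stdSimplex hq μ.mem_stdSimplex π).1)
          (mul_mixObs_le_mixObs (fun m π => (hq m π).1) hle)
    _ ≤ z := by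
        rw [inv_mul_cancel_left₀ hη.ne', EReal.coe_le_coe_iff]
        linarith

end Game

theorem airmaxmin_eq_DECPhi_general
    {Pol Obs Mod I : Type*}
    [Fintype Pol] [Fintype Obs] [Fintype Mod] [Fintype I] [DecidableEq I] [Nonempty Pol]
    (q : Mod → Pol → Obs → ℝ)
    (hq : ∀ m π, (∀ o, 0 ≤ q m π o) ∧ ∑ o, q m π o = 1)
    (V : Mod → Pol → ℝ) (part : Mod × Pol → Option I) (η : ℝ) (hη : 0 < η) :
    AIRmaxmin q V part η = DECPhi q V part η :=
  le_antisymm (AIRmaxmin_le_DECPhi hq hη) (DECPhi_le_AIRmaxmin hq hη)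

/-- **Lemma (equivalence of `AIR^Φ` max-min and the `Φ`-dependent DEC).**
For every `η > 0`,
`max_{ρ∈Δ(Φ)} max_{ν∈Δ(Ψ)} min_{p∈Δ(Π)} AIR^Φ_{ρ,η}(p,ν) = DEC^KL_η(𝓜, Φ)`. -/
theorem airmaxmin_eq_DECPhi
    {Pol Obs Mod I : Type*}
    [Fintype Pol] [Fintype Obs] [Fintype Mod] [Fintype I] [DecidableEq I]
    [Nonempty Pol] [Nonempty Obs] [Nonempty Mod]
    (q : Mod → Pol → Obs → ℝ)
    (hq : ∀ m π, (∀ o, 0 ≤ q m π o) ∧ ∑ o, q m π o = 1)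
    (V : Mod → Pol → ℝ)
    (hV : ∀ m π, V m π ∈ Set.Icc (0 : ℝ) 1)
    (part : Mod × Pol → Option I)
    (hnonempty : ∀ i : I, ∃ mp, part mp = some i)
    (η : ℝ) (hη : 0 < η) :
    AIRmaxmin q V part η = DECPhi q V part η :=
  airmaxmin_eq_DECPhi_general q hq V part η hη
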